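/- Let A = F2[a0, a1, aβ, u0, u1, uβ], let q = a0·u1·uβ + a1·u0·uβ + aβ·u0·u1, and let T' be the localization of A/(q) at the multiplicative set generated by the images of a0, a1, aβ. Then there is a well-defined F2-algebra homomorphism φ from R = F2[x,y,z]/(xy + xz + yz) to T' determined by φ(x) = u0·a0^{-1}, φ(y) = u1·a1^{-1}, φ(z) = uβ·aβ^{-1}, and this homomorphism φ is injective. -/

import Mathlib

/-!
STATEMENT 3: Let `A = F2[a0, a1, aβ, u0, u1, uβ]`, `q = a0·u1·uβ + a1·u0·uβ + aβ·u0·u1`,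
and let `T'` be the localization of `A/(q)` at the multiplicative set generated by the
images of `a0, a1, aβ`.  Then there is a well-defined `F2`-algebra homomorphism
`φ : R = F2[x,y,z]/(xy + xz + yz) → T'` with `φ(x) = u0·a0⁻¹`, `φ(y) = u1·a1⁻¹`,
`φ(z) = uβ·aβ⁻¹`, and `φ` is injective.
-/

noncomputable section

open MvPolynomial

/-- The field with two elements. -/
abbrev F2 : Type := ZMod 2

/-- The polynomial ring `F2[x,y,z]`, with `x = X 0`, `y = X 1`, `z = X 2`. -/
abbrev P3 : Type := MvPolynomial (Fin 3) F2

/-- The relation `xy + xz + yz`. -/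
def relP : P3 := X 0 * X 1 + X 0 * X 2 + X 1 * X 2

/-- The ring `R = F2[x,y,z]/(xy + xz + yz)`. -/
abbrev Rring : Type := P3 ⧸ Ideal.span {relP}

/-- The quotient map `F2[x,y,z] → R`. -/
def pr : P3 →ₐ[F2] Rring := Ideal.Quotient.mkₐ F2 (Ideal.span {relP})

/-- The polynomial ring `A = F2[a0, a1, aβ, u0, u1, uβ]` with
`a0 = X 0`, `a1 = X 1`, `aβ = X 2`, `u0 = X 3`, `u1 = X 4`, `uβ = X 5`. -/
abbrev A6 : Type := MvPolynomial (Fin 6) F2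

/-- The Euler-class relation `q = a0·u1·uβ + a1·u0·uβ + aβ·u0·u1`. -/
def qrel : A6 := X 0 * X 4 * X 5 + X 1 * X 3 * X 5 + X 2 * X 3 * X 4

/-- The quotient `A/(q)`. -/
abbrev Aq : Type := A6 ⧸ Ideal.span {qrel}

/-- The quotient map `A → A/(q)`. -/
def aq : A6 →+* Aq := Ideal.Quotient.mk (Ideal.span {qrel})

/-- The multiplicative set generated by the images of `a0, a1, aβ` in `A/(q)`. -/
def Sa : Submonoid Aq := Submonoid.closure {aq (X 0), aq (X 1), aq (X 2)}

/-- `T'`, the localization of `A/(q)` at `a0, a1, aβ`. -/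
abbrev T' : Type := Localization Sa

instance : Algebra F2 T' :=
  ((algebraMap Aq T').comp (algebraMap F2 Aq)).toAlgebra (R := F2) (S := T')

/-- `a0` as an element of the multiplicative set. -/
def a0S : Sa := ⟨aq (X 0), Submonoid.subset_closure (by simp)⟩

/-- `a1` as an element of the multiplicative set. -/
def a1S : Sa := ⟨aq (X 1), Submonoid.subset_closure (by simp)⟩

/-- `aβ` as an element of the multiplicative set. -/
def aβS : Sa := ⟨aq (X 2), Submonoid.subset_closure (by simp)⟩

/-- The images of `x, y, z` in `T'`. -/
def vT : Fin 3 → T' :=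
  ![Localization.mk (aq (X 3)) a0S, Localization.mk (aq (X 4)) a1S, Localization.mk (aq (X 5)) aβS]

theorem aq_qrel :
    aq (X 0) * aq (X 4) * aq (X 5) + aq (X 1) * aq (X 3) * aq (X 5)
      + aq (X 2) * aq (X 3) * aq (X 4) = 0 := by
  have h : aq qrel = 0 := Ideal.Quotient.eq_zero_iff_mem.2 (Ideal.subset_span rfl)
  simpa [qrel] using h

theorem vT_rel : vT 0 * vT 1 + vT 0 * vT 2 + vT 1 * vT 2 = 0 := by
  have h := aq_qrel
  simp only [vT, Matrix.cons_val, Localization.mk_mul, Localization.add_mk]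
  rw [← Localization.mk_zero 1, Localization.mk_eq_mk_iff, Localization.r_iff_exists]
  refine ⟨1, ?_⟩
  simp only [a0S, a1S, aβS, Submonoid.coe_mul, Submonoid.coe_one]
  linear_combination (aq (X 0) * aq (X 1) * aq (X 2)) * h

/-- The ring homomorphism `R → T'`. -/
def phiR : Rring →+* T' :=
  Ideal.Quotient.lift (Ideal.span {relP})
    (eval₂Hom ((algebraMap Aq T').comp (algebraMap F2 Aq)) vT) (by
      intro a ha
      have hle : Ideal.span {relP} ≤
          RingHom.ker (eval₂Hom ((algebraMap Aq T').comp (algebraMap F2 Aq)) vT) := by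
        rw [Ideal.span_singleton_le_iff_mem, RingHom.mem_ker]
        simpa [relP] using vT_rel
      exact hle ha)

theorem phiR_X (i : Fin 3) : phiR (pr (X i)) = vT i := by
  exact (Ideal.Quotient.lift_mk _ _ _).trans (eval₂Hom_X' _ _ _)

/-- The values in `R` of the retraction on the variables of `A`. -/
def wR : Fin 6 → Rring := ![1, 1, 1, pr (X 0), pr (X 1), pr (X 2)]

theorem pr_rel : pr (X 0) * pr (X 1) + pr (X 0) * pr (X 2) + pr (X 1) * pr (X 2) = 0 := by
  have h : pr relP = 0 := Ideal.Quotient.eq_zero_iff_mem.2 (Ideal.subset_span rfl)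
  simpa [relP] using h

/-- The map `A/(q) → R` setting the Euler classes to `1`. -/
def psi0 : Aq →+* Rring :=
  Ideal.Quotient.lift (Ideal.span {qrel}) (eval₂Hom (algebraMap F2 Rring) wR) (by
      intro a ha
      have hle : Ideal.span {qrel} ≤ RingHom.ker (eval₂Hom (algebraMap F2 Rring) wR) := by
        rw [Ideal.span_singleton_le_iff_mem, RingHom.mem_ker]
        simp only [qrel, map_add, map_mul, eval₂Hom_X', wR, Matrix.cons_val]
        linear_combination pr_rel
      exact hle ha)

theorem psi0_X (i : Fin 6) : psi0 (aq (X i)) = wR i := by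
  exact (Ideal.Quotient.lift_mk _ _ _).trans (eval₂Hom_X' _ _ _)

theorem psi0_Sa (s : Sa) : psi0 s = 1 := by
  have hle : Sa ≤ MonoidHom.mker (psi0 : Aq →* Rring) := by
    refine Submonoid.closure_le.2 ?_
    rintro _ (rfl | rfl | rfl) <;> exact psi0_X _
  exact hle s.2

/-- The retraction `T' → R`. -/
def psi : T' →+* Rring :=
  IsLocalization.lift (M := Sa) (S := T') (P := Rring) (g := psi0) (fun s => by rw [psi0_Sa]; exact isUnit_one)

theorem psi_mk (a : Aq) (s : Sa) : psi (Localization.mk a s) = psi0 a := by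
  rw [Localization.mk_eq_mk', psi, IsLocalization.lift_mk'_spec, psi0_Sa, one_mul]

theorem psi_phi : psi.comp phiR = RingHom.id Rring := by
  apply Ideal.Quotient.ringHom_ext
  apply MvPolynomial.ringHom_ext'
  · exact Subsingleton.elim _ _
  · intro i
    change psi (phiR (pr (X i))) = pr (X i)
    rw [phiR_X]
    fin_cases i
    · exact (psi_mk _ _).trans (psi0_X 3)
    · exact (psi_mk _ _).trans (psi0_X 4)
    · exact (psi_mk _ _).trans (psi0_X 5)

/-- There is a well-defined injective `F2`-algebra homomorphism `φ : R → T'` with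
`φ(x) = u0·a0⁻¹`, `φ(y) = u1·a1⁻¹`, `φ(z) = uβ·aβ⁻¹`. -/
theorem geometric_fixed_points_embeds :
    ∃ φ : Rring →ₐ[F2] T',
      φ (pr (X 0)) = Localization.mk (aq (X 3)) a0S ∧
      φ (pr (X 1)) = Localization.mk (aq (X 4)) a1S ∧
      φ (pr (X 2)) = Localization.mk (aq (X 5)) aβS ∧
      Function.Injective φ := by
  refine ⟨{ phiR with commutes' := fun r => ?_ }, phiR_X 0, phiR_X 1, phiR_X 2, ?_⟩
  · exact RingHom.congr_fun (Subsingleton.elim (phiR.comp (algebraMap F2 Rring))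
      (algebraMap F2 T')) r
  · exact Function.LeftInverse.injective (g := psi) (fun x => RingHom.congr_fun psi_phi x)

end
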